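/- For every integer e ≥ 5 and each i ∈ {2,3}, there exists a finite metabelian σ-group M of order 3^{6+e}, generated by two elements x and y satisfying w^3 = 1, y^3 = s₅, s₂^3 = s₄^2 s₅, s₃^3 = s₅^2, t₃ = s₃ w^{i-1}, t₄ = s₄, and t₅ = s₅, whose abelianization is isomorphic to (ZMod (3^e)) × (ZMod 3). -/

import Mathlib

/-- The commutator `[a,b] = a⁻¹ * b⁻¹ * a * b`. -/
def comm' {G : Type*} [Group G] (a b : G) : G := a⁻¹ * b⁻¹ * a * b

/-- `s₂ = [y,x]` and `s_j = [s_(j-1), x]` for `j ≥ 3`. -/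
def sgen {G : Type*} [Group G] (x y : G) : ℕ → G
  | 0 => 1
  | 1 => 1
  | 2 => comm' y x
  | (n + 3) => comm' (sgen x y (n + 2)) x

/-- `t_j = [s_(j-1), y]` for `j ≥ 3`. -/
def tgenD {G : Type*} [Group G] (x y : G) (j : ℕ) : G := comm' (sgen x y (j - 1)) y

/-- `t₂ = [y,x]` and `t_j = [t_(j-1), y]` for `j ≥ 3`. -/
def tgenB {G : Type*} [Group G] (x y : G) : ℕ → G
  | 0 => 1
  | 1 => 1
  | 2 => comm' y x
  | (n + 3) => comm' (tgenB x y (n + 2)) y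

/-- A σ-group: a group admitting an automorphism acting as inversion on the
abelianization. -/
def IsSigmaGroup (G : Type*) [Group G] : Prop :=
  ∃ σ : G ≃* G, ∀ g : G, Abelianization.of (σ g) = (Abelianization.of g)⁻¹

/-- A group is metabelian if its commutator subgroup is abelian, i.e. the second
derived subgroup is trivial. -/
def IsMetabelian (G : Type*) [Group G] : Prop := derivedSeries G 2 = ⊥


/-! Modulo the central subgroup `⟨w⟩` the commutator subgroup is `ℤ[ω] ⧸ 9` with `x` and `y` both
acting as `ω`. It extends to the ring `B = ℤ[T] ⧸ (T² + T - 8, 9 (T - 1), 27)` of order `3⁵`, in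
which `1` plays the role of `y`: conjugation by `x` and `y` is multiplication by `T`, where
`T³ = 1`, and `y³ = s₅` becomes the identity `1 + T + T² = 9 = (T - 1)⁴`. The missing factor
`⟨w⟩` is a Heisenberg extension of `B` by a `T`-invariant alternating form. The involution
`T ↦ T⁻¹` of `B`, composed with negation, reverses the sign of that form, and so induces the
automorphism inverting the abelianization. -/

section Commutators

variable {G : Type*} [Group G]

lemma comm'_eq_of_mul_eq {a b z : G} (h : a * b = b * a * z) : comm' a b = z := by
  rw [comm', mul_assoc, h]
  group

lemma comm'_mem {H : Subgroup G} {a b : G} (ha : a ∈ H) (hb : b ∈ H) : comm' a b ∈ H :=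
  H.mul_mem (H.mul_mem (H.mul_mem (H.inv_mem ha) (H.inv_mem hb)) ha) hb

lemma comm'_mem_commutator (a b : G) : comm' a b ∈ commutator G := by
  simpa [commutatorElement_def, comm', commutator_def] using
    Subgroup.commutator_mem_commutator (Subgroup.mem_top a⁻¹) (Subgroup.mem_top b⁻¹)

lemma isMetabelian_of_commute (h : ∀ a ∈ commutator G, ∀ b ∈ commutator G, a * b = b * a) :
    IsMetabelian G := by
  rw [IsMetabelian, derivedSeries_succ, derivedSeries_one,
    Subgroup.commutator_eq_bot_iff_le_centralizer]
  exact fun a ha => Subgroup.mem_centralizer_iff.2 fun b hb => h b hb a ha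

lemma isSigmaGroup_of_ker_eq_commutator {A : Type*} [Group A] {φ : G →* A}
    (hφ : φ.ker = commutator G) (σ : G ≃* G) (hσ : ∀ g, φ (σ g) = (φ g)⁻¹) : IsSigmaGroup G := by
  refine ⟨σ, fun g => ?_⟩
  rw [eq_inv_iff_mul_eq_one, ← map_mul, ← MonoidHom.mem_ker, Abelianization.ker_of, ← hφ,
    MonoidHom.mem_ker, map_mul, hσ, inv_mul_cancel]

end Commutators

/-- The homomorphism from `ZMod n` sending `1` to a given element killed by `n`. -/
def zmodHomOfNsmulEqZero {n : ℕ} {A : Type*} [AddGroup A] (a : A) (ha : n • a = 0) :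
    ZMod n →+ A :=
  ZMod.lift n ⟨zmultiplesHom A a, by simpa using ha⟩

lemma zmodHomOfNsmulEqZero_natCast {n : ℕ} {A : Type*} [AddGroup A] (a : A) (ha : n • a = 0)
    (k : ℕ) : zmodHomOfNsmulEqZero a ha (k : ZMod n) = k • a := by
  simpa [zmodHomOfNsmulEqZero] using ZMod.lift_coe n ⟨zmultiplesHom A a, by simpa using ha⟩ (k : ℤ)

/-- The data for the group `HeisenbergTwist.Elem` below: a Heisenberg extension of `V` by `C`, in
which every element moreover acts on `V` as the power of `rot` given by its weight. The weight,
with values in `ZMod n`, is split into its contributions from `V` and from `C`. -/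
structure HeisenbergTwist (n : ℕ) (V C : Type*) [AddCommGroup V] [AddCommGroup C] where
  rot : AddMonoid.End V
  rot_pow : rot ^ n = 1
  form : V →+ V →+ C
  form_self (v : V) : form v v = 0
  form_rot (v v' : V) : form (rot v) (rot v') = form v v'
  vecWeight : V →+ ZMod n
  vecWeight_rot (v : V) : vecWeight (rot v) = vecWeight v
  cenWeight : C →+ ZMod n
  cenWeight_form (v v' : V) : cenWeight (form v v') = 0

namespace HeisenbergTwist

variable {n : ℕ} {V C : Type*} [AddCommGroup V] [AddCommGroup C]

/-- The action of `ZMod n` on `V` in which `1` acts as `rot`. -/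
def act (D : HeisenbergTwist n V C) (k : ZMod n) : AddMonoid.End V := D.rot ^ k.val

/-- The group attached to `D`, with underlying set `V × C`. -/
@[ext] structure Elem (D : HeisenbergTwist n V C) where
  vec : V
  cen : C

variable {D : HeisenbergTwist n V C}

@[simp] lemma act_zero (v : V) : D.act 0 v = v := by
  simp [act]

lemma act_one (hn : 1 < n) (v : V) : D.act 1 v = D.rot v := by
  have : Fact (1 < n) := ⟨hn⟩
  simp [act, ZMod.val_one]

lemma act_add [NeZero n] (j k : ZMod n) (v : V) : D.act (j + k) v = D.act j (D.act k v) := by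
  rw [act, ZMod.val_add, ← pow_eq_pow_mod _ D.rot_pow, pow_add]
  rfl

@[simp] lemma form_act (k : ZMod n) (v v' : V) :
    D.form (D.act k v) (D.act k v') = D.form v v' := by
  simp only [act, AddMonoid.End.coe_pow]
  induction k.val with
  | zero => rfl
  | succ m ih => rw [Function.iterate_succ_apply', Function.iterate_succ_apply', D.form_rot, ih]

lemma map_act_eq {A : Type*} {φ : V → A} (hφ : ∀ v, φ (D.rot v) = φ v) (k : ZMod n) (v : V) :
    φ (D.act k v) = φ v := by
  simp only [act, AddMonoid.End.coe_pow]
  induction k.val with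
  | zero => rfl
  | succ m ih => rw [Function.iterate_succ_apply', hφ, ih]

@[simp] lemma vecWeight_act (k : ZMod n) (v : V) : D.vecWeight (D.act k v) = D.vecWeight v :=
  map_act_eq D.vecWeight_rot k v

lemma map_act_eq_act_neg [NeZero n] {S : V → V} (hS : ∀ v, D.rot (S (D.rot v)) = S v) (k : ZMod n)
    (v : V) : S (D.act k v) = D.act (-k) (S v) := by
  have hpow (m : ℕ) (v : V) : D.rot^[m] (S (D.rot^[m] v)) = S v := by
    induction m with
    | zero => rfl
    | succ m ih => rw [Function.iterate_succ_apply, Function.iterate_succ_apply', hS, ih]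
  have hk : D.act k (S (D.act k v)) = S v := by
    simpa only [act, AddMonoid.End.coe_pow] using hpow k.val v
  rw [← hk, ← act_add, neg_add_cancel, act_zero]

namespace Elem

/-- The underlying set of the group attached to `D`. -/
def equivProd (D : HeisenbergTwist n V C) : D.Elem ≃ V × C where
  toFun g := (g.vec, g.cen)
  invFun p := ⟨p.1, p.2⟩

/-- The power of `rot` by which an element acts on `V`. -/
def weight (g : D.Elem) : ZMod n := D.vecWeight g.vec + D.cenWeight g.cen

instance : Mul D.Elem where
  mul g h := ⟨D.act h.weight g.vec + h.vec,
    g.cen + h.cen + D.form (D.act h.weight g.vec) h.vec⟩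

instance : One D.Elem := ⟨⟨0, 0⟩⟩

instance : Inv D.Elem := ⟨fun g => ⟨-D.act (-g.weight) g.vec, -g.cen⟩⟩

@[simp] lemma one_vec : (1 : D.Elem).vec = 0 := rfl

@[simp] lemma one_cen : (1 : D.Elem).cen = 0 := rfl

@[simp] lemma inv_vec (g : D.Elem) : g⁻¹.vec = -D.act (-g.weight) g.vec := rfl

@[simp] lemma inv_cen (g : D.Elem) : g⁻¹.cen = -g.cen := rfl

@[simp] lemma mul_vec (g h : D.Elem) : (g * h).vec = D.act h.weight g.vec + h.vec := rfl

@[simp] lemma mul_cen (g h : D.Elem) :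
    (g * h).cen = g.cen + h.cen + D.form (D.act h.weight g.vec) h.vec := rfl

@[simp] lemma weight_mul (g h : D.Elem) : (g * h).weight = g.weight + h.weight := by
  simp only [weight, mul_vec, mul_cen, map_add, vecWeight_act, D.cenWeight_form]
  abel

variable [NeZero n]

instance : Group D.Elem := Group.ofLeftAxioms
  (fun g h k => by
    ext
    · simp [add_comm h.weight, act_add, add_assoc]
    · simp only [mul_vec, mul_cen, weight_mul, map_add, AddMonoidHom.add_apply,
        add_comm h.weight, act_add, form_act]
      abel)
  (fun g => by ext <;> simp)
  (fun g => by
    ext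
    · simp [← act_add]
    · simp [← act_add, D.form_self])

lemma comm'_eq (g h : D.Elem) : comm' g h =
    ⟨D.act h.weight g.vec - g.vec - (D.act g.weight h.vec - h.vec),
      D.form (D.act h.weight g.vec) h.vec - D.form (D.act g.weight h.vec) g.vec
        - D.form (D.act g.weight h.vec + g.vec) (D.act h.weight g.vec + h.vec)⟩ := by
  set d := D.act h.weight g.vec - g.vec - (D.act g.weight h.vec - h.vec) with hd
  set c := D.form (D.act h.weight g.vec) h.vec - D.form (D.act g.weight h.vec) g.vec
    - D.form (D.act g.weight h.vec + g.vec) (D.act h.weight g.vec + h.vec) with hc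
  have hvec : D.act g.weight h.vec + g.vec + d = D.act h.weight g.vec + h.vec := by
    rw [hd]; abel
  have hw : weight (⟨d, c⟩ : D.Elem) = 0 := by
    simp only [weight, hd, hc, map_sub, vecWeight_act, D.cenWeight_form, sub_self]
    exact add_zero 0
  refine comm'_eq_of_mul_eq ?_
  ext
  · simp only [mul_vec, hw, act_zero, hvec]
  · simp only [mul_vec, mul_cen, hw, act_zero]
    rw [hc, ← hvec, map_add (D.form (D.act g.weight h.vec + g.vec)), D.form_self, zero_add]
    abel

lemma pow_eq_of_weight_eq_zero {g : D.Elem} (hg : g.weight = 0) (m : ℕ) :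
    g ^ m = ⟨m • g.vec, m • g.cen⟩ := by
  induction m with
  | zero => ext <;> simp
  | succ m ih =>
    rw [pow_succ, ih]
    ext <;> simp [hg, succ_nsmul, D.form_self]

lemma mk_zero_pow (a : C) (m : ℕ) : (⟨0, a⟩ : D.Elem) ^ m = ⟨0, m • a⟩ := by
  induction m with
  | zero => ext <;> simp
  | succ m ih =>
    rw [pow_succ, ih]
    ext <;> simp [succ_nsmul]

end Elem

/-- The automorphism of the group attached to `D` induced by an automorphism `S` of `V` that
reverses `rot`, `form` and the weight. -/
def reversal [NeZero n] (D : HeisenbergTwist n V C) (S : V ≃+ V)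
    (hrot : ∀ v, D.rot (S (D.rot v)) = S v) (hform : ∀ v v', D.form (S v) (S v') = -D.form v v')
    (hweight : ∀ v, D.vecWeight (S v) = -D.vecWeight v) : D.Elem ≃* D.Elem where
  toFun g := ⟨S g.vec, -g.cen⟩
  invFun g := ⟨S.symm g.vec, -g.cen⟩
  left_inv g := by ext <;> simp
  right_inv g := by ext <;> simp
  map_mul' g h := by
    have hw : Elem.weight (⟨S h.vec, -h.cen⟩ : D.Elem) = -h.weight := by
      simp only [Elem.weight, hweight, map_neg, neg_add]
    ext
    · simp only [Elem.mul_vec, hw, map_add, map_act_eq_act_neg hrot]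
    · simp only [Elem.mul_cen, hw, ← map_act_eq_act_neg hrot, hform]
      abel

end HeisenbergTwist

/-- The additive group of the ring `B` above, in the basis `1`, `T - 1`. -/
abbrev TModule : Type := ZMod 27 × ZMod 9

namespace TModule

/-- Multiplication by `6` from `ZMod 9` to `ZMod 27`. -/
def six : ZMod 9 →+ ZMod 27 := zmodHomOfNsmulEqZero 6 (by decide)

/-- Multiplication by `T` on `B`. -/
def rot : AddMonoid.End TModule where
  toFun v := (v.1 + six v.2, ZMod.castHom (by decide : 9 ∣ 27) (ZMod 9) v.1 - 2 * v.2)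
  map_zero' := by simp
  map_add' v v' := by
    ext
    · simp; abel
    · simp; ring

/-- The negative of the involution `T ↦ T⁻¹` of `B`. -/
def negConj : TModule ≃+ TModule where
  toFun v := (-v.1 - six v.2, v.2)
  invFun v := (-v.1 - six v.2, v.2)
  left_inv v := by simp
  right_inv v := by simp
  map_add' v v' := by
    ext
    · simp; abel
    · rfl

/-- The coefficient of `1`, modulo `3`. -/
def coeffOne : TModule →+ ZMod 3 :=
  (ZMod.castHom (by decide : 3 ∣ 27) (ZMod 3)).toAddMonoidHom.comp (AddMonoidHom.fst _ _)

/-- The coefficient of `T - 1`, modulo `3`. -/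
def coeffTSubOne : TModule →+ ZMod 3 :=
  (ZMod.castHom (by decide : 3 ∣ 9) (ZMod 3)).toAddMonoidHom.comp (AddMonoidHom.snd _ _)

/-- The alternating form on `B` given by the determinant of the coefficients modulo `3`. -/
def wedge : TModule →+ TModule →+ ZMod 3 :=
  AddMonoidHom.mk' (fun v =>
    (AddMonoidHom.mulLeft (coeffOne v)).comp coeffTSubOne
      - (AddMonoidHom.mulLeft (coeffTSubOne v)).comp coeffOne) fun v v' => by
    ext u
    simp [add_mul]
    ring

lemma wedge_apply (v v' : TModule) :
    wedge v v' = coeffOne v * coeffTSubOne v' - coeffTSubOne v * coeffOne v' := rfl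

lemma wedge_self (v : TModule) : wedge v v = 0 := by
  rw [wedge_apply, mul_comm, sub_self]

set_option maxRecDepth 100000 in
lemma rot_pow_three : rot ^ 3 = 1 := by
  have h : ∀ v, rot (rot (rot v)) = v := by decide
  exact AddMonoidHom.ext h

set_option maxRecDepth 100000 in
lemma rot_negConj_rot : ∀ v, rot (negConj (rot v)) = negConj v := by decide

set_option maxRecDepth 100000 in
lemma coeffOne_rot : ∀ v, coeffOne (rot v) = coeffOne v := by decide

set_option maxRecDepth 100000 in
lemma coeffTSubOne_rot : ∀ v, coeffTSubOne (rot v) = coeffOne v + coeffTSubOne v := by decide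

set_option maxRecDepth 100000 in
lemma coeffOne_negConj : ∀ v, coeffOne (negConj v) = -coeffOne v := by decide

set_option maxRecDepth 100000 in
lemma exists_nsmul_add_nsmul_eq {v : TModule} (hv : coeffOne v = 0) :
    ∃ i j : ℕ, i • ((0, 1) : TModule) + j • (6, -3) = v := by
  have h : ∀ v : TModule, coeffOne v = 0 → (v.2 + 3 * (5 * (v.1.val / 3) : ℕ)).val
      • ((0, 1) : TModule) + (5 * (v.1.val / 3)) • (6, -3) = v := by decide
  exact ⟨_, _, h v hv⟩

lemma wedge_rot (v v' : TModule) : wedge (rot v) (rot v') = wedge v v' := by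
  simp only [wedge_apply, coeffOne_rot, coeffTSubOne_rot]
  ring

lemma wedge_negConj (v v' : TModule) : wedge (negConj v) (negConj v') = -wedge v v' := by
  simp only [wedge_apply, coeffOne_negConj]
  change -_ * coeffTSubOne v' - coeffTSubOne v * -_ = _
  ring

end TModule

section CentralCoordinate

variable (f : ℕ)

/-- The embedding `k ↦ 3 ^ (f + 1) * k` of `ZMod 3` into `ZMod (3 ^ (f + 2))`, whose image
parametrizes the powers of `w`. -/
def wExponent : ZMod 3 →+ ZMod (3 ^ (f + 2)) :=
  zmodHomOfNsmulEqZero (3 ^ (f + 1)) (by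
    have h := ZMod.natCast_self (3 ^ (f + 2))
    push_cast at h
    rw [nsmul_eq_mul, ← h]
    push_cast
    ring)

lemma wExponent_natCast (k : ℕ) : wExponent f k = 3 ^ (f + 1) * k := by
  rw [wExponent, zmodHomOfNsmulEqZero_natCast, nsmul_eq_mul, mul_comm]

/-- Reduction of the central coordinate modulo `3 ^ (f + 1)`. -/
def cenModW : ZMod (3 ^ (f + 2)) →+* ZMod (3 ^ (f + 1)) :=
  ZMod.castHom (pow_dvd_pow 3 (Nat.le_succ _)) _

/-- Reduction of the central coordinate modulo `3`. -/
def cenModThree : ZMod (3 ^ (f + 2)) →+* ZMod 3 :=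
  ZMod.castHom (dvd_pow_self 3 (Nat.succ_ne_zero _)) _

lemma cenModThree_wExponent (k : ZMod 3) : cenModThree f (wExponent f k) = 0 := by
  obtain ⟨m, rfl⟩ := ZMod.natCast_zmod_surjective k
  have h3 : cenModThree f 3 = 0 := map_ofNat _ 3
  rw [wExponent_natCast, map_mul, map_pow, h3, zero_pow (Nat.succ_ne_zero f), zero_mul]

lemma cenModW_eq_zero_iff (a : ZMod (3 ^ (f + 2))) : cenModW f a = 0 ↔ ∃ k, a = wExponent f k := by
  constructor
  · intro h
    obtain ⟨m, rfl⟩ := ZMod.natCast_zmod_surjective a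
    rw [map_natCast, ZMod.natCast_eq_zero_iff] at h
    obtain ⟨k, rfl⟩ := h
    exact ⟨k, by rw [wExponent_natCast]; push_cast; rfl⟩
  · rintro ⟨k, rfl⟩
    obtain ⟨m, rfl⟩ := ZMod.natCast_zmod_surjective k
    have h := ZMod.natCast_self (3 ^ (f + 1))
    push_cast at h
    rw [wExponent_natCast, map_mul, map_pow, map_ofNat, h, zero_mul]

end CentralCoordinate

/-- The data for the group `M_{e,i}` with `e = f + 1` and `i = c + 1`. The weight is the one for
which `x` and `y` both have weight `1`. -/
def d10 (f c : ℕ) : HeisenbergTwist 3 TModule (ZMod (3 ^ (f + 2))) where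
  rot := TModule.rot
  rot_pow := TModule.rot_pow_three
  form := (AddMonoidHom.compHom ((wExponent f).comp (AddMonoidHom.mulLeft (c : ZMod 3)))).comp
    TModule.wedge
  form_self v := by
    change wExponent f (c * TModule.wedge v v) = 0
    rw [TModule.wedge_self, mul_zero, map_zero]
  form_rot v v' := congrArg (wExponent f <| c * ·) (TModule.wedge_rot v v')
  vecWeight := (AddMonoidHom.mulLeft (1 - cenModThree f (c * 3 ^ f))).comp TModule.coeffOne
  vecWeight_rot v := congrArg (_ * ·) (TModule.coeffOne_rot v)
  cenWeight := (cenModThree f).toAddMonoidHom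
  cenWeight_form v v' := cenModThree_wExponent f _

namespace d10

open HeisenbergTwist HeisenbergTwist.Elem

variable {f c : ℕ}

lemma form_apply (v v' : TModule) :
    (d10 f c).form v v' = wExponent f (c * TModule.wedge v v') := rfl

lemma rot_eq : (d10 f c).rot = TModule.rot := rfl

lemma weight_eq (g : (d10 f c).Elem) :
    g.weight = (1 - cenModThree f (c * 3 ^ f)) * TModule.coeffOne g.vec + cenModThree f g.cen := rfl

/-- The generator `x`. -/
def x : (d10 f c).Elem := ⟨0, 1⟩

/-- The generator `y`; its central coordinate is what makes `y ^ 3` free of `w`. -/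
def y : (d10 f c).Elem := ⟨(1, 0), c * 3 ^ f⟩

lemma weight_x : (x : (d10 f c).Elem).weight = 1 := by
  simp [weight_eq, x]

lemma weight_y : (y : (d10 f c).Elem).weight = 1 := by
  have : TModule.coeffOne (1, 0) = 1 := rfl
  simp [weight_eq, y, this]

lemma comm'_x (g : (d10 f c).Elem) :
    comm' g x = ⟨TModule.rot g.vec - g.vec, -(d10 f c).form g.vec (TModule.rot g.vec)⟩ := by
  rw [comm'_eq, weight_x, act_one (by decide), rot_eq]
  simp [x]

/-- The elements that make up the commutator subgroup when `TModule.coeffOne v = 0`; here `k` is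
the exponent of `w`. -/
def derived (v : TModule) (k : ZMod 3) : (d10 f c).Elem := ⟨v, wExponent f k⟩

variable {v v' : TModule}

lemma weight_derived (hv : TModule.coeffOne v = 0) (k : ZMod 3) :
    (derived v k : (d10 f c).Elem).weight = 0 := by
  simp [weight_eq, derived, hv, cenModThree_wExponent]

lemma derived_mul (hv : TModule.coeffOne v = 0) (hv' : TModule.coeffOne v' = 0) (k k' : ZMod 3) :
    (derived v k : (d10 f c).Elem) * derived v' k' = derived (v + v') (k + k') := by
  ext1
  · rw [mul_vec, weight_derived hv', act_zero]
    rfl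
  · rw [mul_cen, weight_derived hv', act_zero, form_apply, derived, derived, TModule.wedge_apply,
      hv, hv']
    simp [derived]

lemma derived_pow (hv : TModule.coeffOne v = 0) (k : ZMod 3) (m : ℕ) :
    (derived v k : (d10 f c).Elem) ^ m = derived (m • v) (m • k) := by
  rw [pow_eq_of_weight_eq_zero (weight_derived hv k), derived, derived, map_nsmul]

lemma comm'_derived_x (hv : TModule.coeffOne v = 0) (k : ZMod 3) :
    comm' (derived v k : (d10 f c).Elem) x = derived (TModule.rot v - v) 0 := by
  rw [comm'_x, form_apply, derived, TModule.wedge_apply, TModule.coeffOne_rot, hv]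
  simp [derived]

lemma comm'_derived_y (hv : TModule.coeffOne v = 0) (k : ZMod 3) :
    comm' (derived v k : (d10 f c).Elem) y
      = derived (TModule.rot v - v) (c * TModule.coeffTSubOne v) := by
  have hwedge : TModule.wedge (TModule.rot v) (1, 0) - TModule.wedge (1, 0) v
      - TModule.wedge ((1, 0) + v) (TModule.rot v + (1, 0)) = TModule.coeffTSubOne v := by
    have h3 : (3 : ZMod 3) = 0 := rfl
    simp only [TModule.wedge_apply, map_add, AddMonoidHom.add_apply, TModule.coeffOne_rot,
      TModule.coeffTSubOne_rot, hv, show TModule.coeffOne (1, 0) = 1 from rfl,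
      show TModule.coeffTSubOne (1, 0) = 0 from rfl]
    linear_combination (-TModule.coeffTSubOne v) * h3
  rw [comm'_eq, weight_derived hv, weight_y, act_one (by decide), act_zero, rot_eq, derived,
    derived, ← hwedge, mul_sub, mul_sub, map_sub, map_sub]
  ext1
  · simp [y]
  · rfl

lemma sgen_two : sgen (x : (d10 f c).Elem) y 2 = derived (0, 1) (-c) := by
  change comm' (y : (d10 f c).Elem) x = _
  have hwedge : TModule.wedge (1, 0) (TModule.rot (1, 0)) = 1 := rfl
  rw [comm'_x, form_apply, y, hwedge, mul_one, ← map_neg]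
  exact Elem.ext (by decide : TModule.rot (1, 0) - (1, 0) = (0, 1)) rfl

lemma sgen_three : sgen (x : (d10 f c).Elem) y 3 = derived (6, -3) 0 := by
  change comm' (sgen x y 2) x = _
  rw [sgen_two, comm'_derived_x rfl]
  rfl

lemma sgen_four : sgen (x : (d10 f c).Elem) y 4 = derived (9, 6) 0 := by
  change comm' (sgen x y 3) x = _
  rw [sgen_three, comm'_derived_x rfl]
  rfl

lemma sgen_five : sgen (x : (d10 f c).Elem) y 5 = derived (9, 0) 0 := by
  change comm' (sgen x y 4) x = _
  rw [sgen_four, comm'_derived_x rfl]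
  rfl

lemma tgenD_three : tgenD (x : (d10 f c).Elem) y 3 = derived (6, -3) c := by
  change comm' (sgen x y 2) y = _
  rw [sgen_two, comm'_derived_y rfl]
  congr 1
  exact mul_one _

lemma tgenD_four : tgenD (x : (d10 f c).Elem) y 4 = sgen x y 4 := by
  change comm' (sgen x y 3) y = _
  rw [sgen_four, sgen_three, comm'_derived_y rfl]
  rfl

lemma tgenD_five : tgenD (x : (d10 f c).Elem) y 5 = sgen x y 5 := by
  change comm' (sgen x y 4) y = _
  rw [sgen_five, sgen_four, comm'_derived_y rfl]
  rfl

lemma x_pow (m : ℕ) : (x : (d10 f c).Elem) ^ m = ⟨0, m⟩ := by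
  rw [x, mk_zero_pow, nsmul_one]

lemma w_pow (m : ℕ) : ((x : (d10 f c).Elem) ^ 3 ^ (f + 1)) ^ m = derived 0 m := by
  rw [← pow_mul, x_pow, derived, wExponent_natCast]
  push_cast
  rfl

lemma w_pow_three : ((x : (d10 f c).Elem) ^ 3 ^ (f + 1)) ^ 3 = 1 := by
  rw [w_pow, derived, show ((3 : ℕ) : ZMod 3) = 0 from rfl, map_zero]
  rfl

lemma y_pow_three : (y : (d10 f c).Elem) ^ 3 = sgen x y 5 := by
  have h : (y : (d10 f c).Elem) ^ 3 = y * y * y := pow_three' y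
  rw [h, sgen_five, derived]
  ext1
  · simp only [mul_vec, weight_y, act_one (by decide : 1 < 3), rot_eq]
    exact (by decide : TModule.rot (TModule.rot (1, 0) + (1, 0)) + (1, 0) = (9, 0))
  · simp only [mul_vec, mul_cen, weight_y, act_one (by decide : 1 < 3), rot_eq, form_apply]
    simp only [y, show TModule.wedge (TModule.rot (1, 0)) (1, 0) = -1 from rfl,
      show TModule.wedge (TModule.rot (TModule.rot (1, 0) + (1, 0))) (1, 0) = 0 from rfl]
    rw [mul_neg_one, map_neg, wExponent_natCast, mul_zero, map_zero]
    ring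

lemma sgen_two_pow_three :
    sgen (x : (d10 f c).Elem) y 2 ^ 3 = sgen x y 4 ^ 2 * sgen x y 5 := by
  rw [sgen_two, sgen_four, sgen_five, derived_pow rfl, derived_pow rfl, derived_mul rfl rfl]
  congr 1
  exact (by decide : ∀ a : ZMod 3, 3 • -a = 2 • 0 + 0) c

lemma sgen_three_pow_three : sgen (x : (d10 f c).Elem) y 3 ^ 3 = sgen x y 5 ^ 2 := by
  rw [sgen_three, sgen_five, derived_pow rfl, derived_pow rfl]
  rfl

lemma tgenD_three_eq :
    tgenD (x : (d10 f c).Elem) y 3 = sgen x y 3 * (x ^ 3 ^ (f + 1)) ^ c := by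
  rw [tgenD_three, sgen_three, w_pow, derived_mul rfl rfl, add_zero, zero_add]

/-- The map onto the abelianization. -/
def abelianizationHom : (d10 f c).Elem →* Multiplicative (ZMod (3 ^ (f + 1)) × ZMod 3) where
  toFun g := Multiplicative.ofAdd (cenModW f g.cen, TModule.coeffOne g.vec)
  map_one' := by simp
  map_mul' g h := by
    have hform (v v' : TModule) : cenModW f ((d10 f c).form v v') = 0 :=
      (cenModW_eq_zero_iff f _).2 ⟨_, rfl⟩
    have hact (k : ZMod 3) (v : TModule) :
        TModule.coeffOne ((d10 f c).act k v) = TModule.coeffOne v :=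
      map_act_eq TModule.coeffOne_rot k v
    simp [← ofAdd_add, hform, hact]

lemma exists_derived_eq_of_mem_ker {g : (d10 f c).Elem} (hg : g ∈ abelianizationHom.ker) :
    ∃ v k, TModule.coeffOne v = 0 ∧ derived v k = g := by
  obtain ⟨hcen, hvec⟩ := Prod.ext_iff.1 (Multiplicative.ofAdd.injective (MonoidHom.mem_ker.1 hg))
  obtain ⟨k, hk⟩ := (cenModW_eq_zero_iff f _).1 hcen
  exact ⟨g.vec, k, hvec, Elem.ext rfl hk.symm⟩

lemma exists_abelianizationHom_eq (t : Multiplicative (ZMod (3 ^ (f + 1)) × ZMod 3)) :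
    ∃ m n : ℕ, abelianizationHom ((x : (d10 f c).Elem) ^ m * y ^ n) = t := by
  set a := t.toAdd.1
  set b := t.toAdd.2
  refine ⟨(a - b.val * cenModW f (c * 3 ^ f)).val, b.val, Multiplicative.toAdd.injective ?_⟩
  have hx : abelianizationHom (x : (d10 f c).Elem) = Multiplicative.ofAdd (1, 0) := by
    simp [abelianizationHom, x]
  have hy : abelianizationHom (y : (d10 f c).Elem)
      = Multiplicative.ofAdd (cenModW f (c * 3 ^ f), 1) := rfl
  rw [map_mul, map_pow, map_pow, hx, hy]
  ext <;> simp [a, b]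

lemma abelianizationHom_surjective :
    Function.Surjective (abelianizationHom : (d10 f c).Elem →* _) := fun t =>
  let ⟨_, _, h⟩ := exists_abelianizationHom_eq t
  ⟨_, h⟩

lemma ker_abelianizationHom_le (hc : (c : ZMod 3) ≠ 0) {H : Subgroup (d10 f c).Elem}
    (hs₂ : sgen x y 2 ∈ H) (hs₃ : sgen x y 3 ∈ H) (ht₃ : tgenD x y 3 ∈ H) :
    abelianizationHom.ker ≤ H := by
  intro g hg
  obtain ⟨v, k, hv, rfl⟩ := exists_derived_eq_of_mem_ker hg
  obtain ⟨i, j, rfl⟩ := TModule.exists_nsmul_add_nsmul_eq hv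
  have hw : derived 0 c ∈ H := by
    have h : (sgen x y 3)⁻¹ * tgenD x y 3 = (derived 0 c : (d10 f c).Elem) := by
      rw [inv_mul_eq_iff_eq_mul, sgen_three, tgenD_three, derived_mul rfl rfl, add_zero, zero_add]
    exact h ▸ H.mul_mem (H.inv_mem hs₃) ht₃
  rw [sgen_two] at hs₂
  rw [sgen_three] at hs₃
  have hmem := H.mul_mem (H.mul_mem (H.pow_mem hs₂ i) (H.pow_mem hs₃ j))
    (H.pow_mem hw ((k + i * c) / c : ZMod 3).val)
  have hi : TModule.coeffOne (i • (0, 1)) = 0 := (map_nsmul _ _ _).trans (smul_zero _)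
  have hj : TModule.coeffOne (j • (6, -3)) = 0 := (map_nsmul _ _ _).trans (smul_zero _)
  rw [derived_pow rfl, derived_pow rfl, derived_pow rfl, derived_mul hi hj, smul_zero,
    smul_zero, add_zero, derived_mul hv (map_zero _)] at hmem
  convert hmem using 2
  · simp
  · simp [field]

lemma ker_abelianizationHom (hc : (c : ZMod 3) ≠ 0) :
    abelianizationHom.ker = commutator (d10 f c).Elem :=
  (ker_abelianizationHom_le hc (comm'_mem_commutator _ _) (comm'_mem_commutator _ _)
    (comm'_mem_commutator _ _)).antisymm (Abelianization.commutator_subset_ker _)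

lemma closure_eq_top (hc : (c : ZMod 3) ≠ 0) :
    Subgroup.closure {(x : (d10 f c).Elem), y} = ⊤ := by
  rw [eq_top_iff]
  intro g _
  have hx : x ∈ Subgroup.closure {(x : (d10 f c).Elem), y} := Subgroup.subset_closure (by simp)
  have hy : y ∈ Subgroup.closure {(x : (d10 f c).Elem), y} := Subgroup.subset_closure (by simp)
  have hs₂ := comm'_mem hy hx
  obtain ⟨m, n, hmn⟩ := exists_abelianizationHom_eq (abelianizationHom g)
  have hker : (x ^ m * y ^ n)⁻¹ * g ∈ abelianizationHom.ker := by
    rw [MonoidHom.mem_ker, map_mul, map_inv, hmn, inv_mul_cancel]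
  rw [← mul_inv_cancel_left (x ^ m * y ^ n) g]
  exact mul_mem (mul_mem (pow_mem hx m) (pow_mem hy n))
    (ker_abelianizationHom_le hc hs₂ (comm'_mem hs₂ hx) (comm'_mem hs₂ hy) hker)

lemma isMetabelian (hc : (c : ZMod 3) ≠ 0) : IsMetabelian (d10 f c).Elem := by
  refine isMetabelian_of_commute fun a ha b hb => ?_
  rw [← ker_abelianizationHom hc] at ha hb
  obtain ⟨v, k, hv, rfl⟩ := exists_derived_eq_of_mem_ker ha
  obtain ⟨v', k', hv', rfl⟩ := exists_derived_eq_of_mem_ker hb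
  rw [derived_mul hv hv', derived_mul hv' hv, add_comm v, add_comm k]

lemma isSigmaGroup (hc : (c : ZMod 3) ≠ 0) : IsSigmaGroup (d10 f c).Elem := by
  refine isSigmaGroup_of_ker_eq_commutator (ker_abelianizationHom hc)
    ((d10 f c).reversal TModule.negConj TModule.rot_negConj_rot (fun v v' => ?_) fun v => ?_)
    fun g => ?_
  · rw [form_apply, form_apply, TModule.wedge_negConj, mul_neg, map_neg]
  · exact (congrArg (_ * ·) (TModule.coeffOne_negConj v)).trans (mul_neg _ _)
  · exact congrArg Multiplicative.ofAdd (Prod.ext (map_neg _ _) (TModule.coeffOne_negConj g.vec))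

lemma nonempty_abelianization_mulEquiv (hc : (c : ZMod 3) ≠ 0) :
    Nonempty (Abelianization (d10 f c).Elem ≃*
      Multiplicative (ZMod (3 ^ (f + 1)) × ZMod 3)) :=
  ⟨(QuotientGroup.quotientMulEquivOfEq (ker_abelianizationHom hc).symm).trans
    (QuotientGroup.quotientKerEquivOfSurjective abelianizationHom abelianizationHom_surjective)⟩

lemma card_elem : Nat.card (d10 f c).Elem = 3 ^ (6 + (f + 1)) := by
  rw [Nat.card_congr (Elem.equivProd (d10 f c))]
  simp only [Nat.card_prod, Nat.card_zmod]
  ring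

end d10

theorem stmt7_general (e i : ℕ) (he : 1 ≤ e) (hi : ¬ 3 ∣ i - 1) :
    ∃ (M : Type) (_ : Group M) (_ : Finite M) (x y : M),
      Subgroup.closure {x, y} = ⊤ ∧
      Nat.card M = 3 ^ (6 + e) ∧
      IsMetabelian M ∧
      IsSigmaGroup M ∧
      (x ^ 3 ^ e) ^ 3 = 1 ∧
      y ^ 3 = sgen x y 5 ∧
      sgen x y 2 ^ 3 = sgen x y 4 ^ 2 * sgen x y 5 ∧
      sgen x y 3 ^ 3 = sgen x y 5 ^ 2 ∧
      tgenD x y 3 = sgen x y 3 * (x ^ 3 ^ e) ^ (i - 1) ∧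
      tgenD x y 4 = sgen x y 4 ∧
      tgenD x y 5 = sgen x y 5 ∧
      Nonempty (Abelianization M ≃* Multiplicative (ZMod (3 ^ e) × ZMod 3)) := by
  obtain ⟨f, rfl⟩ : ∃ f, e = f + 1 := ⟨e - 1, by omega⟩
  have hc : ((i - 1 : ℕ) : ZMod 3) ≠ 0 := by rwa [Ne, ZMod.natCast_eq_zero_iff]
  exact ⟨(d10 f (i - 1)).Elem, inferInstance, Nat.finite_of_card_ne_zero (by simp [d10.card_elem]),
    d10.x, d10.y, d10.closure_eq_top hc, d10.card_elem, d10.isMetabelian hc, d10.isSigmaGroup hc,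
    d10.w_pow_three, d10.y_pow_three, d10.sgen_two_pow_three, d10.sgen_three_pow_three,
    d10.tgenD_three_eq, d10.tgenD_four, d10.tgenD_five, d10.nonempty_abelianization_mulEquiv hc⟩

theorem stmt7 (e i : ℕ) (he : 5 ≤ e) (hi : i = 2 ∨ i = 3) :
    ∃ (M : Type) (_ : Group M) (_ : Finite M) (x y : M),
      Subgroup.closure {x, y} = ⊤ ∧
      Nat.card M = 3 ^ (6 + e) ∧
      IsMetabelian M ∧
      IsSigmaGroup M ∧
      (x ^ 3 ^ e) ^ 3 = 1 ∧
      y ^ 3 = sgen x y 5 ∧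
      sgen x y 2 ^ 3 = sgen x y 4 ^ 2 * sgen x y 5 ∧
      sgen x y 3 ^ 3 = sgen x y 5 ^ 2 ∧
      tgenD x y 3 = sgen x y 3 * (x ^ 3 ^ e) ^ (i - 1) ∧
      tgenD x y 4 = sgen x y 4 ∧
      tgenD x y 5 = sgen x y 5 ∧
      Nonempty (Abelianization M ≃* Multiplicative (ZMod (3 ^ e) × ZMod 3)) :=
  stmt7_general e i (by omega) (by rcases hi with rfl | rfl <;> decide)
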